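/- Let N, d, C be natural numbers at least 2, let p ∈ (0, ∞], let k be a natural number with 7 ≤ k ≤ d + 5, and let σ, δ > 0 satisfy σ/δ ≤ a_{p,d} · N^{−2/(k−6)}, where a_{p,d} = (1/(8√e)) · d^{−1/2 + [1/p − 1/2]_−} (with 1/∞ = 0). Then there is a universal constant C₀ such that for every δ-separated dataset D of size N with C classes in ℝ^d, there exists a feedforward ReLU neural network f : ℝ^d → ℝ of width k and depth at most C₀ · N · k · log₂(k) that (σ, p)-robustly memorizes D. -/

import Mathlib

open scoped ENNReal BigOperators

noncomputable section

/-- A multilayer perceptron (feedforward ReLU network) with input dimension `m`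
and output dimension `n`, given as a nonempty list of affine layers. -/
inductive MLP : ℕ → ℕ → Type
  | last : {m n : ℕ} → Matrix (Fin n) (Fin m) ℝ → (Fin n → ℝ) → MLP m n
  | cons : {m h n : ℕ} → Matrix (Fin h) (Fin m) ℝ → (Fin h → ℝ) → MLP h n → MLP m n

/-- Evaluation of an MLP: every affine layer except the last is followed by a
coordinatewise ReLU. -/
def MLP.eval : {m n : ℕ} → MLP m n → (Fin m → ℝ) → Fin n → ℝ
  | _, _, .last W b, x => W.mulVec x + b
  | _, _, .cons W b rest, x => MLP.eval rest fun i => max ((W.mulVec x + b) i) 0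

/-- Depth of an MLP: the number of affine layers. -/
def MLP.depth : {m n : ℕ} → MLP m n → ℕ
  | _, _, .last _ _ => 1
  | _, _, .cons _ _ rest => MLP.depth rest + 1

/-- Width of an MLP: the maximum of the hidden-layer dimensions. -/
def MLP.width : {m n : ℕ} → MLP m n → ℕ
  | _, _, .last _ _ => 0
  | _, _, @MLP.cons _ h _ _ _ rest => max h (MLP.width rest)

/-- The `l_p` (quasi-)norm on `ℝ^d`, for `p ∈ (0,∞]`. -/
def lpNorm (p : ℝ≥0∞) {d : ℕ} (x : Fin d → ℝ) : ℝ :=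
  if p = ⊤ then ⨆ i, |x i| else (∑ i, |x i| ^ p.toReal) ^ (1 / p.toReal)

/-- The `l_p` norm on `ℝ^d` with a real exponent `p`. -/
def lpNormR (p : ℝ) {d : ℕ} (x : Fin d → ℝ) : ℝ := (∑ i, |x i| ^ p) ^ (1 / p)

/-- `1/p`, with the convention `1/∞ = 0`. -/
def rinv (p : ℝ≥0∞) : ℝ := if p = ⊤ then 0 else 1 / p.toReal

/-- `c_p^+(d) = d^{[1/2 - 1/p]_+}`. -/
def cplus (p : ℝ≥0∞) (d : ℕ) : ℝ := (d : ℝ) ^ max ((1 : ℝ) / 2 - rinv p) 0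

/-- `c_p^-(d) = d^{[1/2 - 1/p]_-}`. -/
def cminus (p : ℝ≥0∞) (d : ℕ) : ℝ := (d : ℝ) ^ min ((1 : ℝ) / 2 - rinv p) 0

/-- A dataset is `(δ, q)`-separated if the minimal `l_q` distance between
differently labeled points equals `δ`. -/
def Separated {N d : ℕ} (q : ℝ≥0∞) (δ : ℝ) (X : Fin N → Fin d → ℝ) (Y : Fin N → ℕ) : Prop :=
  (∀ i j, Y i ≠ Y j → δ ≤ lpNorm q (X i - X j)) ∧
    ∃ i j, Y i ≠ Y j ∧ lpNorm q (X i - X j) = δ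

/-- `f` `(σ, p)`-robustly memorizes the dataset `(X, Y)`. -/
def RobustMem {N d : ℕ} (p : ℝ≥0∞) (σ : ℝ) (X : Fin N → Fin d → ℝ) (Y : Fin N → ℕ)
    (f : (Fin d → ℝ) → ℝ) : Prop :=
  ∀ i, ∀ x : Fin d → ℝ, lpNorm p (x - X i) ≤ σ → f x = (Y i : ℝ)

/-- A matrix `M` `(σ, k)`-preserves a dataset: Euclidean distances between points of
`σ`-neighborhoods (in `l₂`) of differently labeled data points do not decrease. -/
def Preserves {N d m : ℕ} (σ : ℝ) (X : Fin N → Fin d → ℝ) (Y : Fin N → ℕ)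
    (M : Matrix (Fin m) (Fin d) ℝ) : Prop :=
  ∀ i j, Y i ≠ Y j → ∀ a a' : Fin d → ℝ,
    lpNorm 2 (a - X i) ≤ σ → lpNorm 2 (a' - X j) ≤ σ →
      lpNorm 2 (a - a') ≤ lpNorm 2 (M.mulVec a - M.mulVec a')

/-- The `l₂ → l₂` (spectral) operator norm of a matrix. -/
def matOpNorm {m d : ℕ} (M : Matrix (Fin m) (Fin d) ℝ) : ℝ :=
  sSup {c | ∃ x : Fin d → ℝ, lpNorm 2 x ≤ 1 ∧ c = lpNorm 2 (M.mulVec x)}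

/-- Generalized binomial coefficient `C(s, m) = s(s-1)⋯(s-m+1)/m!`. -/
def gchoose (s : ℝ) (m : ℕ) : ℝ := (∏ i ∈ Finset.range m, (s - (i : ℝ))) / (m.factorial : ℝ)

/-!
Project the data to the numbers `⟪g_l, x⟫` for `m` standard Gaussian vectors `g_l`. If `‖w‖ ≥ δ`,
then `|⟪w, g⟫| ≤ s` has probability at most `s / δ`, so for `s / δ` a little below `N ^ (-2 / m)`
each projection leaves less than the fraction `N ^ (-2 / m)` of the still unseparated pairs of
points with different labels, and after `m` of them no pair is left; choosing the `g_l` one after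
the other also keeps every norm `‖g_l‖` at most `2 * √d`. The balls around the data points are thus
mapped into cubes of `ℝ ^ m` whose centres, for different labels, are three radii apart. Bumps
around these cubes, as high as the labels, do not interfere, and the maximum of all of them
memorizes the data. A network of width `m + 4` computes it by carrying the `m` projections along
and treating one coordinate of one bump per layer in four further neurons.
-/

/-! ### Comparison of `l_p` norms -/

section LpNorm

variable {d : ℕ} {p q : ℝ≥0∞} (x : Fin d → ℝ)

lemma rinv_eq_toReal_inv (p : ℝ≥0∞) : rinv p = p⁻¹.toReal := by
  by_cases hp : p = ⊤ <;> simp [rinv, hp]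

lemma rinv_le_rinv (hp : p ≠ 0) (hpq : p ≤ q) : rinv q ≤ rinv p := by
  simp only [rinv_eq_toReal_inv]
  exact ENNReal.toReal_mono (ENNReal.inv_ne_top.2 hp) (ENNReal.inv_le_inv.2 hpq)

lemma rinv_two : rinv 2 = 1 / 2 := by simp [rinv]

lemma lpNorm_eq_toReal_eLpNorm_count (hp : p ≠ 0) :
    lpNorm p x = (MeasureTheory.eLpNorm x p .count).toReal := by
  by_cases hp' : p = ⊤
  · simp [lpNorm, hp', ENNReal.toReal_iSup]
  · simp [lpNorm, hp', MeasureTheory.eLpNorm_eq_lintegral_rpow_enorm_toReal hp hp',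
      MeasureTheory.lintegral_count, ← ENNReal.toReal_rpow, ENNReal.toReal_sum,
      tsum_fintype]

lemma lpNorm_two_eq_norm_toLp : lpNorm 2 x = ‖WithLp.toLp 2 x‖ := by
  simp [lpNorm, EuclideanSpace.norm_eq, Real.sqrt_eq_rpow]

lemma abs_le_lpNorm (hp : p ≠ 0) (i : Fin d) : |x i| ≤ lpNorm p x := by
  rw [lpNorm_eq_toReal_eLpNorm_count x hp, ← Real.norm_eq_abs, ← toReal_enorm]
  exact ENNReal.toReal_mono (MeasureTheory.eLpNorm_count_lt_top hp |>.2 (by simp)).ne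
    (MeasureTheory.enorm_le_eLpNorm_count _ _ hp)

lemma lpNorm_rpow_toReal (hp : p ≠ 0) (hp' : p ≠ ⊤) :
    lpNorm p x ^ p.toReal = ∑ i, |x i| ^ p.toReal := by
  rw [lpNorm, if_neg hp', one_div, Real.rpow_inv_rpow (by positivity)
    (ENNReal.toReal_pos hp hp').ne']

lemma lpNorm_anti (hp : p ≠ 0) (hpq : p ≤ q) : lpNorm q x ≤ lpNorm p x := by
  have hq : q ≠ 0 := (hp.bot_lt.trans_le hpq).ne'
  have hS : 0 ≤ lpNorm p x := by
    rw [lpNorm_eq_toReal_eLpNorm_count x hp]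
    positivity
  rcases eq_or_ne q ⊤ with rfl | hq'
  · rw [lpNorm, if_pos rfl]
    exact Real.iSup_le (abs_le_lpNorm x hp) hS
  have hp' : p ≠ ⊤ := ne_top_of_le_ne_top hq' hpq
  have hpq' : 0 ≤ q.toReal - p.toReal := sub_nonneg.2 (ENNReal.toReal_mono hq' hpq)
  have rpow_split {t : ℝ} (ht : 0 ≤ t) :
      t ^ (q.toReal - p.toReal) * t ^ p.toReal = t ^ q.toReal := by
    rw [← Real.rpow_add_of_nonneg ht hpq' ENNReal.toReal_nonneg, sub_add_cancel]
  refine (Real.rpow_le_rpow_iff (by simp only [lpNorm, if_neg hq']; positivity) hS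
    (ENNReal.toReal_pos hq hq')).1 ?_
  calc lpNorm q x ^ q.toReal
      = ∑ i, |x i| ^ (q.toReal - p.toReal) * |x i| ^ p.toReal := by
        simp only [lpNorm_rpow_toReal x hq hq', rpow_split (abs_nonneg _)]
    _ ≤ ∑ i, lpNorm p x ^ (q.toReal - p.toReal) * |x i| ^ p.toReal := by
        gcongr with i
        exact abs_le_lpNorm x hp i
    _ = lpNorm p x ^ q.toReal := by
        rw [← Finset.mul_sum, ← lpNorm_rpow_toReal x hp hp', rpow_split hS]

lemma lpNorm_le_rpow_mul_lpNorm (hp : p ≠ 0) (hpq : p ≤ q) :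
    lpNorm p x ≤ (d : ℝ) ^ (rinv p - rinv q) * lpNorm q x := by
  have hq : q ≠ 0 := (hp.bot_lt.trans_le hpq).ne'
  have hq_fin : MeasureTheory.eLpNorm x q .count ≠ ⊤ :=
    (MeasureTheory.eLpNorm_count_lt_top hq |>.2 (by simp)).ne
  have hexp : 0 ≤ 1 / p.toReal - 1 / q.toReal := by
    simpa [rinv_eq_toReal_inv] using rinv_le_rinv hp hpq
  have h_holder := ENNReal.toReal_mono
    (ENNReal.mul_ne_top hq_fin (ENNReal.rpow_ne_top_of_nonneg hexp (by simp)))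
    (MeasureTheory.eLpNorm_le_eLpNorm_mul_rpow_measure_univ (μ := .count) hpq
      (f := x) (by fun_prop))
  simpa [lpNorm_eq_toReal_eLpNorm_count x hp, lpNorm_eq_toReal_eLpNorm_count x hq, mul_comm,
    rinv_eq_toReal_inv, ← ENNReal.toReal_rpow] using h_holder

lemma lpNorm_two_le_cplus_mul_lpNorm (hp : p ≠ 0) : lpNorm 2 x ≤ cplus p d * lpNorm p x := by
  rcases le_total p 2 with hp2 | hp2
  · have : rinv 2 ≤ rinv p := rinv_le_rinv hp hp2
    rw [cplus, ← rinv_two, max_eq_right (by linarith), Real.rpow_zero, one_mul]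
    exact lpNorm_anti x hp hp2
  · have : rinv p ≤ rinv 2 := rinv_le_rinv two_ne_zero hp2
    rw [cplus, ← rinv_two, max_eq_left (by linarith)]
    exact lpNorm_le_rpow_mul_lpNorm x two_ne_zero hp2

end LpNorm

/-! ### Gaussian projections -/

section GaussianProjection

open MeasureTheory ProbabilityTheory Module
open scoped RealInnerProductSpace

lemma gaussianPDFReal_le (μ : ℝ) (v : NNReal) (x : ℝ) :
    gaussianPDFReal μ v x ≤ (√(2 * Real.pi * v))⁻¹ := by
  rw [gaussianPDFReal_def]
  refine mul_le_of_le_one_right (by positivity) (Real.exp_le_one_iff.2 ?_)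
  exact div_nonpos_of_nonpos_of_nonneg (neg_nonpos.2 (sq_nonneg _)) (by positivity)

lemma gaussianReal_le_smul_volume (μ : ℝ) {v : NNReal} (hv : v ≠ 0) :
    gaussianReal μ v ≤ ENNReal.ofReal (√(2 * Real.pi * v))⁻¹ • volume := by
  rw [gaussianReal_of_var_ne_zero μ hv, ← withDensity_const]
  exact withDensity_mono (.of_forall fun x ↦
    ENNReal.ofReal_le_ofReal (gaussianPDFReal_le μ v x))

lemma gaussianReal_real_Icc_le (μ : ℝ) {v : NNReal} (hv : v ≠ 0) {a b : ℝ} (hab : a ≤ b) :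
    (gaussianReal μ v).real (Set.Icc a b) ≤ (b - a) / √(2 * Real.pi * v) := by
  have h_vol := ENNReal.toReal_mono
    (ENNReal.mul_ne_top ENNReal.ofReal_ne_top isCompact_Icc.measure_ne_top)
    (gaussianReal_le_smul_volume μ hv (Set.Icc a b))
  simpa [Real.volume_Icc, hab, measureReal_def, div_eq_inv_mul] using h_vol

variable {E : Type*} [NormedAddCommGroup E] [InnerProductSpace ℝ E] [FiniteDimensional ℝ E]
  [MeasurableSpace E] [BorelSpace E]

lemma map_inner_stdGaussian (w : E) :
    (stdGaussian E).map (fun g ↦ ⟪w, g⟫) = gaussianReal 0 (‖w‖₊ ^ 2) := by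
  have h := IsGaussian.map_eq_gaussianReal (μ := stdGaussian E) (innerSL ℝ w)
  rw [integral_strongDual_stdGaussian, variance_dual_stdGaussian, innerSL_apply_norm,
    Real.toNNReal_pow (norm_nonneg w), norm_toNNReal] at h
  exact h

lemma integral_inner_sq_stdGaussian (w : E) : ∫ g, ⟪w, g⟫ ^ 2 ∂stdGaussian E = ‖w‖ ^ 2 := by
  rw [← innerSL_apply_norm (𝕜 := ℝ) w, ← variance_dual_stdGaussian]
  exact (variance_of_integral_eq_zero (innerSL ℝ w).continuous.aemeasurable
    (integral_strongDual_stdGaussian _)).symm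

lemma integral_norm_sq_stdGaussian : ∫ g, ‖g‖ ^ 2 ∂stdGaussian E = finrank ℝ E := by
  have integrable_sq (w : E) : Integrable (fun g ↦ ⟪w, g⟫ ^ 2) (stdGaussian E) :=
    (IsGaussian.memLp_dual _ (innerSL ℝ w) 2 (by simp)).integrable_sq
  simp_rw [← (stdOrthonormalBasis ℝ E).sum_sq_inner_right]
  rw [integral_finsetSum _ fun i _ ↦ integrable_sq _]
  simp [integral_inner_sq_stdGaussian]

lemma stdGaussian_real_abs_inner_le {w : E} (hw : w ≠ 0) {s : ℝ} (hs : 0 ≤ s) :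
    (stdGaussian E).real {g | |⟪w, g⟫| ≤ s} ≤ s / ‖w‖ := by
  have hsqrt : 2 * ‖w‖ ≤ √(2 * Real.pi * ‖w‖ ^ 2) := by
    refine Real.le_sqrt_of_sq_le ?_
    nlinarith [Real.pi_gt_three, sq_nonneg ‖w‖]
  calc (stdGaussian E).real {g | |⟪w, g⟫| ≤ s}
      = (gaussianReal 0 (‖w‖₊ ^ 2)).real (Set.Icc (-s) s) := by
        rw [← map_inner_stdGaussian, map_measureReal_apply (by fun_prop) measurableSet_Icc]
        simp only [Set.preimage, Set.mem_Icc, abs_le]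
    _ ≤ (s - -s) / √(2 * Real.pi * ‖w‖ ^ 2) := by
        simpa using gaussianReal_real_Icc_le 0 (pow_ne_zero 2 (nnnorm_ne_zero_iff.2 hw))
          (neg_le_self hs)
    _ ≤ (s - -s) / (2 * ‖w‖) := by gcongr; linarith
    _ = s / ‖w‖ := by field_simp; ring

section CardFilter

variable {Ω α : Type*} (P : Finset α) {p : α → Ω → Prop} [∀ a ω, Decidable (p a ω)]

lemma card_filter_eq_sum_indicator (ω : Ω) :
    ((P.filter (p · ω)).card : ℝ) = ∑ a ∈ P, {ω | p a ω}.indicator 1 ω := by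
  simp [Set.indicator_apply]

variable [MeasurableSpace Ω] {μ : Measure Ω} [IsFiniteMeasure μ]

lemma integrable_card_filter (hp : ∀ a, MeasurableSet {ω | p a ω}) :
    Integrable (fun ω ↦ ((P.filter (p · ω)).card : ℝ)) μ := by
  simp only [card_filter_eq_sum_indicator]
  exact integrable_finsetSum _ fun a _ ↦ (integrable_const 1).indicator (hp a)

lemma integral_card_filter (hp : ∀ a, MeasurableSet {ω | p a ω}) :
    ∫ ω, ((P.filter (p · ω)).card : ℝ) ∂μ = ∑ a ∈ P, μ.real {ω | p a ω} := by
  simp only [card_filter_eq_sum_indicator]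
  rw [integral_finsetSum _ fun a _ ↦ (integrable_const 1).indicator (hp a)]
  simp only [integral_indicator_one (hp _)]

end CardFilter

variable {α : Type*} {w : α → E} {P : Finset α} {δ s q : ℝ}

lemma measurableSet_abs_inner_le (w : E) (s : ℝ) : MeasurableSet {g | |⟪w, g⟫| ≤ s} :=
  measurableSet_le (by fun_prop) measurable_const

lemma integral_card_filter_abs_inner_le (hδ : 0 < δ) (hs : 0 ≤ s) (hw : ∀ a ∈ P, δ ≤ ‖w a‖) :
    ∫ g, ((P.filter fun a ↦ |⟪w a, g⟫| ≤ s).card : ℝ) ∂stdGaussian E ≤ s / δ * P.card := by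
  rw [integral_card_filter P fun a ↦ measurableSet_abs_inner_le (w a) s, mul_comm, ← nsmul_eq_mul]
  refine Finset.sum_le_card_nsmul _ _ _ fun a ha ↦ ?_
  have hwa : 0 < ‖w a‖ := hδ.trans_le (hw a ha)
  exact (stdGaussian_real_abs_inner_le (norm_pos_iff.1 hwa) hs).trans
    (div_le_div_of_nonneg_left hs hδ (hw a ha))

lemma exists_norm_le_card_filter_abs_inner_le [Nontrivial E] (hδ : 0 < δ) (hs : 0 ≤ s)
    (hw : ∀ a ∈ P, δ ≤ ‖w a‖) (hsq : s / δ ≤ 3 / 4 * q) (hq : 0 < q) :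
    ∃ g : E, ‖g‖ ≤ 2 * √(finrank ℝ E) ∧
      ((P.filter fun a ↦ |⟪w a, g⟫| ≤ s).card : ℝ) ≤ q * P.card := by
  rcases P.eq_empty_or_nonempty with rfl | hP
  · exact ⟨0, by simp, by simp⟩
  have hn : (0 : ℝ) < finrank ℝ E := by exact_mod_cast finrank_pos
  have hqP : 0 < q * P.card := mul_pos hq (by exact_mod_cast hP.card_pos)
  set bad : E → ℝ := fun g ↦ (P.filter fun a ↦ |⟪w a, g⟫| ≤ s).card
  have integral_bad : ∫ g, bad g ∂stdGaussian E ≤ 3 / 4 * (q * P.card) := by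
    refine (integral_card_filter_abs_inner_le hδ hs hw).trans ?_
    rw [← mul_assoc]
    gcongr
  have integrable_bad : Integrable bad (stdGaussian E) :=
    integrable_card_filter P fun a ↦ measurableSet_abs_inner_le (w a) s
  have integrable_norm_sq : Integrable (fun g : E ↦ ‖g‖ ^ 2) (stdGaussian E) :=
    IsGaussian.memLp_two_id.integrable_norm_pow two_ne_zero
  -- Some `g` is no worse than average for the count of bad pairs and `‖g‖ ^ 2` simultaneously;
  -- with these weights the average is at most `3/4 + 1/4` of `q * P.card`.
  obtain ⟨g, hg⟩ := exists_le_integral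
    (integrable_bad.add (integrable_norm_sq.const_mul (q * P.card / (4 * finrank ℝ E))))
  have hg_le : bad g + q * P.card / (4 * finrank ℝ E) * ‖g‖ ^ 2 ≤ q * P.card := by
    refine hg.trans ?_
    rw [integral_add' integrable_bad (integrable_norm_sq.const_mul _), integral_const_mul,
      integral_norm_sq_stdGaussian]
    have : q * P.card / (4 * finrank ℝ E) * finrank ℝ E = q * P.card / 4 := by field_simp
    linarith
  have bad_nonneg : 0 ≤ bad g := Nat.cast_nonneg _
  refine ⟨g, ?_, le_trans (le_add_of_nonneg_right (by positivity)) hg_le⟩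
  have norm_sq_le : ‖g‖ ^ 2 ≤ 4 * finrank ℝ E := by
    have : q * P.card / (4 * finrank ℝ E) * ‖g‖ ^ 2 ≤ q * P.card := by linarith
    rwa [div_mul_eq_mul_div, div_le_iff₀ (by positivity), mul_le_mul_iff_right₀ hqP] at this
  refine le_of_sq_le_sq ?_ (by positivity)
  rw [mul_pow, Real.sq_sqrt hn.le]
  linarith

lemma exists_forall_norm_le_card_filter_abs_inner_le [Nontrivial E] (hδ : 0 < δ) (hs : 0 ≤ s)
    (hw : ∀ a ∈ P, δ ≤ ‖w a‖) (hsq : s / δ ≤ 3 / 4 * q) (hq : 0 < q) (m : ℕ) :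
    ∃ g : Fin m → E, (∀ l, ‖g l‖ ≤ 2 * √(finrank ℝ E)) ∧
      ((P.filter fun a ↦ ∀ l, |⟪w a, g l⟫| ≤ s).card : ℝ) ≤ q ^ m * P.card := by
  induction m generalizing P with
  | zero => exact ⟨Fin.elim0, fun l ↦ l.elim0, by simp⟩
  | succ m ih =>
    obtain ⟨g₀, hg₀, hcard₀⟩ := exists_norm_le_card_filter_abs_inner_le hδ hs hw hsq hq
    obtain ⟨g, hg, hcard⟩ := ih (P := P.filter fun a ↦ |⟪w a, g₀⟫| ≤ s)
      fun a ha ↦ hw a (Finset.filter_subset _ _ ha)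
    refine ⟨Fin.cons g₀ g, Fin.cases hg₀ hg, ?_⟩
    simp only [Fin.forall_fin_succ, Fin.cons_zero, Fin.cons_succ, ← Finset.filter_filter]
    calc _ ≤ q ^ m * _ := hcard
      _ ≤ q ^ m * (q * P.card) := by gcongr
      _ = q ^ (m + 1) * P.card := by ring

lemma exists_linearMap_separating_labels [Nontrivial E] {ι β : Type*} [Fintype ι] [Nonempty ι]
    {m : ℕ} (hm : m ≠ 0) (hδ : 0 < δ) (hs : 0 ≤ s) (X : ι → E) (Y : ι → β)
    (hX : ∀ i j, Y i ≠ Y j → δ ≤ ‖X i - X j‖)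
    (hsδ : s / δ ≤ 3 / 4 * (Fintype.card ι : ℝ) ^ (-(2 : ℝ) / m)) :
    ∃ T : E →ₗ[ℝ] (Fin m → ℝ), (∀ x, ‖T x‖ ≤ 2 * √(finrank ℝ E) * ‖x‖) ∧
      ∀ i j, Y i ≠ Y j → s ≤ ‖T (X i) - T (X j)‖ := by
  classical
  have hN : (0 : ℝ) < Fintype.card ι := by exact_mod_cast Fintype.card_pos
  set P : Finset (ι × ι) := Finset.univ.filter fun a ↦ Y a.1 ≠ Y a.2 with hP
  have card_lt : P.card < Fintype.card ι ^ 2 := by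
    obtain ⟨i⟩ := ‹Nonempty ι›
    rw [sq, ← Fintype.card_prod]
    exact Finset.card_lt_univ_of_notMem (x := (i, i)) (by simp [hP])
  obtain ⟨g, hg, hcard⟩ := exists_forall_norm_le_card_filter_abs_inner_le
    (w := fun a : ι × ι ↦ X a.1 - X a.2) hδ hs (fun a ha ↦ hX _ _ (Finset.mem_filter.1 ha).2)
    hsδ (Real.rpow_pos_of_pos hN _) m
  have no_bad : P.filter (fun a ↦ ∀ l, |⟪X a.1 - X a.2, g l⟫| ≤ s) = ∅ := by
    rw [← Finset.card_eq_zero, ← Nat.lt_one_iff]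
    rify
    refine hcard.trans_lt ?_
    rw [← Real.rpow_mul_natCast hN.le, div_mul_cancel₀ _ (by positivity), Real.rpow_neg hN.le,
      inv_mul_lt_one₀ (by positivity)]
    exact_mod_cast card_lt
  refine ⟨.pi fun l ↦ innerₛₗ ℝ (g l), fun x ↦ ?_, fun i j hij ↦ ?_⟩
  · refine (pi_norm_le_iff_of_nonneg (by positivity)).2 fun l ↦ ?_
    exact (norm_inner_le_norm (𝕜 := ℝ) (g l) x).trans (by gcongr; exact hg l)
  · obtain ⟨l, hl⟩ : ∃ l, s < |⟪X i - X j, g l⟫| := by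
      simpa [hP, hij] using (Finset.filter_eq_empty_iff.1 no_bad (x := (i, j)))
    rw [← map_sub]
    refine hl.le.trans (le_of_eq_of_le ?_ (norm_le_pi_norm _ l))
    rw [real_inner_comm]
    rfl

end GaussianProjection

/-! ### Networks as stacks of affine maps -/

lemma toMatrix'_linear_mulVec_add_apply_zero {m n : ℕ} (A : (Fin m → ℝ) →ᵃ[ℝ] (Fin n → ℝ))
    (x : Fin m → ℝ) :
    (LinearMap.toMatrix' A.linear).mulVec x + A 0 = A x := by
  rw [LinearMap.toMatrix'_mulVec, A.decomp]
  simp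

namespace MLP

variable {d m n h : ℕ}

/-- The single-layer network computing the affine map `A`. -/
def ofAffine (A : (Fin m → ℝ) →ᵃ[ℝ] (Fin n → ℝ)) : MLP m n :=
  .last (LinearMap.toMatrix' A.linear) (A 0)

/-- The network that applies the affine map `A`, then ReLU, then `net`. -/
def consAffine (A : (Fin m → ℝ) →ᵃ[ℝ] (Fin h → ℝ)) (net : MLP h n) : MLP m n :=
  .cons (LinearMap.toMatrix' A.linear) (A 0) net

lemma eval_ofAffine (A : (Fin m → ℝ) →ᵃ[ℝ] (Fin n → ℝ)) (x : Fin m → ℝ) :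
    (ofAffine A).eval x = A x :=
  toMatrix'_linear_mulVec_add_apply_zero A x

lemma eval_consAffine (A : (Fin m → ℝ) →ᵃ[ℝ] (Fin h → ℝ)) (net : MLP h n) (x : Fin m → ℝ) :
    (consAffine A net).eval x = net.eval (A x)⁺ :=
  congrArg (fun v : Fin h → ℝ ↦ net.eval v⁺) (toMatrix'_linear_mulVec_add_apply_zero A x)

end MLP

/-- The output of a stack of hidden layers with neurons indexed by `κ`: each affine map of the
list, taken in order, is followed by a ReLU (the positive part in `κ → ℝ`). -/
def hiddenEval {κ : Type*} (L : List ((κ → ℝ) →ᵃ[ℝ] (κ → ℝ))) (v : κ → ℝ) : κ → ℝ :=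
  L.foldl (fun v A ↦ (A v)⁺) v

section HiddenEval

variable {κ : Type*}

lemma hiddenEval_cons (A : (κ → ℝ) →ᵃ[ℝ] (κ → ℝ)) (L) (v : κ → ℝ) :
    hiddenEval (A :: L) v = hiddenEval L (A v)⁺ := rfl

lemma hiddenEval_append (L L' : List ((κ → ℝ) →ᵃ[ℝ] (κ → ℝ))) (v : κ → ℝ) :
    hiddenEval (L ++ L') v = hiddenEval L' (hiddenEval L v) := List.foldl_append

lemma exists_mlp_eval_eq_hiddenEval {k : ℕ} (e : κ ≃ Fin k)
    (L : List ((κ → ℝ) →ᵃ[ℝ] (κ → ℝ))) (φ : (κ → ℝ) →ᵃ[ℝ] ℝ) :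
    ∃ net : MLP k 1, net.width ≤ k ∧ net.depth = L.length + 1 ∧
      ∀ v : κ → ℝ, net.eval (v ∘ e.symm) 0 = φ (hiddenEval L v) := by
  let R : (κ → ℝ) ≃ₗ[ℝ] (Fin k → ℝ) := LinearEquiv.funCongrLeft ℝ ℝ e.symm
  have R_symm (v : κ → ℝ) : R.symm (v ∘ e.symm) = v := R.symm_apply_apply v
  induction L with
  | nil =>
    refine ⟨.ofAffine (.pi fun _ ↦ φ.comp R.symm.toLinearMap.toAffineMap), Nat.zero_le _, rfl,
      fun v ↦ ?_⟩
    simp [MLP.eval_ofAffine, R_symm, hiddenEval]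
  | cons A L ih =>
    obtain ⟨net, h_width, h_depth, h_eval⟩ := ih
    refine ⟨.consAffine (R.toLinearMap.toAffineMap.comp (A.comp R.symm.toLinearMap.toAffineMap))
      net, max_le le_rfl h_width, congrArg (· + 1) h_depth, fun v ↦ ?_⟩
    rw [MLP.eval_consAffine, hiddenEval_cons, ← h_eval]
    simp only [AffineMap.comp_apply, LinearMap.coe_toAffineMap, LinearEquiv.coe_coe, R_symm]
    rfl

lemma exists_mlp_width_eq_card [Fintype κ] {d : ℕ} (A : (Fin d → ℝ) →ᵃ[ℝ] (κ → ℝ))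
    (L : List ((κ → ℝ) →ᵃ[ℝ] (κ → ℝ))) (φ : (κ → ℝ) →ᵃ[ℝ] ℝ) :
    ∃ net : MLP d 1, net.width = Fintype.card κ ∧ net.depth = L.length + 2 ∧
      ∀ x, net.eval x 0 = φ (hiddenEval L (A x)⁺) := by
  let e := Fintype.equivFin κ
  obtain ⟨net, h_width, h_depth, h_eval⟩ := exists_mlp_eval_eq_hiddenEval e L φ
  refine ⟨.consAffine ((LinearMap.funLeft ℝ ℝ e.symm).toAffineMap.comp A) net,
    max_eq_left h_width, congrArg (· + 1) h_depth, fun x ↦ ?_⟩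
  rw [MLP.eval_consAffine, ← h_eval]
  rfl

end HiddenEval

/-- The piecewise linear bump around the cube of radius `r` centred at `c`: it is `1` on the cube
and `0` outside the concentric cube of radius `2 * r`. -/
def cubeBump {m : ℕ} (r : ℝ) (c z : Fin m → ℝ) : ℝ :=
  (1 - r⁻¹ * ∑ j, (|z j - c j| - r)⁺)⁺

section CubeBump

variable {m : ℕ} {r : ℝ} {c z : Fin m → ℝ}

lemma cubeBump_eq_one (h : ‖z - c‖ ≤ r) : cubeBump r c z = 1 := by
  have h_excess (j : Fin m) : (|z j - c j| - r)⁺ = 0 :=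
    posPart_eq_zero.2 (sub_nonpos.2 ((norm_le_pi_norm (z - c) j).trans h))
  simp [cubeBump, h_excess]

lemma cubeBump_le_one (hr : 0 ≤ r) : cubeBump r c z ≤ 1 := by
  refine sup_le (sub_le_self 1 ?_) zero_le_one
  exact mul_nonneg (inv_nonneg.2 hr) (Finset.sum_nonneg fun j _ ↦ posPart_nonneg _)

lemma cubeBump_eq_zero (hr : 0 < r) (h : 2 * r ≤ ‖z - c‖) : cubeBump r c z = 0 := by
  obtain ⟨j, hj⟩ : ∃ j, 2 * r ≤ |z j - c j| := by
    by_contra! h_lt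
    exact h.not_gt ((pi_norm_lt_iff (by positivity)).2 h_lt)
  have h_sum : r ≤ ∑ j, (|z j - c j| - r)⁺ :=
    calc r ≤ (|z j - c j| - r)⁺ := le_trans (by linarith) (le_posPart _)
      _ ≤ ∑ j, (|z j - c j| - r)⁺ :=
        Finset.single_le_sum (fun j _ ↦ posPart_nonneg (|z j - c j| - r)) (Finset.mem_univ j)
  rw [cubeBump, posPart_eq_zero, sub_nonpos, le_inv_mul_iff₀ hr, mul_one]
  exact h_sum

lemma cubeBump_add_right (b : Fin m → ℝ) : cubeBump r (c + b) (z + b) = cubeBump r c z := by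
  simp [cubeBump]

end CubeBump

/-! ### A network computing a maximum of bumps -/

section Layers

variable {m : ℕ} {z : Fin m → ℝ} {t u a b r : ℝ}

/-- The state of the hidden neurons: `m` features `z`, carried along unchanged, the maximum `t`
of the values seen so far, and three scratch neurons `u`, `a`, `b`. -/
def hiddenState (z : Fin m → ℝ) (t u a b : ℝ) : Fin m ⊕ Fin 4 → ℝ :=
  Sum.elim z ![t, u, a, b]

/-- The value of the neuron `l`, as an affine function of the state. -/
abbrev neuron (l : Fin m ⊕ Fin 4) : (Fin m ⊕ Fin 4 → ℝ) →ᵃ[ℝ] ℝ := (LinearMap.proj l).toAffineMap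

/-- The layer that keeps the features and feeds the other four neurons with `T`, `U`, `A`, `B`. -/
def stateLayer (T U A B : (Fin m ⊕ Fin 4 → ℝ) →ᵃ[ℝ] ℝ) :
    (Fin m ⊕ Fin 4 → ℝ) →ᵃ[ℝ] (Fin m ⊕ Fin 4 → ℝ) :=
  .pi (Sum.elim (fun j ↦ neuron (.inl j)) ![T, U, A, B])

lemma posPart_stateLayer (hz : 0 ≤ z) (T U A B : (Fin m ⊕ Fin 4 → ℝ) →ᵃ[ℝ] ℝ) :
    (stateLayer T U A B (hiddenState z t u a b))⁺ =
      hiddenState z (T (hiddenState z t u a b))⁺ (U (hiddenState z t u a b))⁺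
        (A (hiddenState z t u a b))⁺ (B (hiddenState z t u a b))⁺ := by
  ext l
  rcases l with j | i
  · exact posPart_of_nonneg (hz j)
  · fin_cases i <;> rfl

/-- Adds the scratch neurons `a`, `b` to `u`, and then stores in `a`, `b` the two one-sided
excesses of the `j`-th feature over the cube of radius `r` centred at `c`. -/
def scanLayer (r : ℝ) (c : Fin m → ℝ) (j : Fin m) :
    (Fin m ⊕ Fin 4 → ℝ) →ᵃ[ℝ] (Fin m ⊕ Fin 4 → ℝ) :=
  stateLayer (neuron (.inr 0)) (neuron (.inr 1) + neuron (.inr 2) + neuron (.inr 3))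
    (neuron (.inl j) - .const ℝ _ (c j + r)) (.const ℝ _ (c j - r) - neuron (.inl j))

/-- Turns the accumulated excess `u + a + b` into the value of the bump. -/
def bumpLayer (r : ℝ) : (Fin m ⊕ Fin 4 → ℝ) →ᵃ[ℝ] (Fin m ⊕ Fin 4 → ℝ) :=
  stateLayer (neuron (.inr 0))
    (.const ℝ _ 1 - r⁻¹ • (neuron (.inr 1) + neuron (.inr 2) + neuron (.inr 3))) 0 0

/-- Stores in `a` by how much `y * u` exceeds `t`. -/
def compareLayer (y : ℝ) : (Fin m ⊕ Fin 4 → ℝ) →ᵃ[ℝ] (Fin m ⊕ Fin 4 → ℝ) :=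
  stateLayer (neuron (.inr 0)) 0 (y • neuron (.inr 1) - neuron (.inr 0)) 0

/-- Adds `a` to `t` and clears the scratch neurons. -/
def accumulateLayer : (Fin m ⊕ Fin 4 → ℝ) →ᵃ[ℝ] (Fin m ⊕ Fin 4 → ℝ) :=
  stateLayer (neuron (.inr 0) + neuron (.inr 2)) 0 0 0

lemma posPart_sub_add_posPart_sub (hr : 0 ≤ r) (x c : ℝ) :
    (x - (c + r))⁺ + (c - r - x)⁺ = (|x - c| - r)⁺ := by
  rcases le_total c x with h | h
  · rw [abs_of_nonneg (sub_nonneg.2 h), posPart_eq_zero.2 (by linarith : c - r - x ≤ 0), add_zero,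
      sub_sub]
  · rw [abs_of_nonpos (sub_nonpos.2 h), posPart_eq_zero.2 (by linarith : x - (c + r) ≤ 0), zero_add,
      neg_sub, sub_right_comm]

lemma posPart_scanLayer (hz : 0 ≤ z) (ht : 0 ≤ t) (hu : 0 ≤ u + a + b) (c : Fin m → ℝ)
    (j : Fin m) :
    (scanLayer r c j (hiddenState z t u a b))⁺ =
      hiddenState z t (u + a + b) (z j - (c j + r))⁺ (c j - r - z j)⁺ := by
  rw [scanLayer, posPart_stateLayer hz]
  simp [hiddenState, ht, hu]

lemma posPart_bumpLayer (hz : 0 ≤ z) (ht : 0 ≤ t) :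
    (bumpLayer r (hiddenState z t u a b))⁺ =
      hiddenState z t (1 - r⁻¹ * (u + a + b))⁺ 0 0 := by
  rw [bumpLayer, posPart_stateLayer hz]
  simp [hiddenState, ht, mul_add]

lemma posPart_compareLayer (hz : 0 ≤ z) (ht : 0 ≤ t) (y : ℝ) :
    (compareLayer y (hiddenState z t u a b))⁺ = hiddenState z t 0 (y * u - t)⁺ 0 := by
  rw [compareLayer, posPart_stateLayer hz]
  simp [hiddenState, ht]

lemma posPart_accumulateLayer (hz : 0 ≤ z) (hta : 0 ≤ t + a) :
    (accumulateLayer (hiddenState z t u a b))⁺ = hiddenState z (t + a) 0 0 0 := by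
  rw [accumulateLayer, posPart_stateLayer hz]
  simp [hiddenState, hta]

lemma hiddenEval_map_scanLayer_append_bumpLayer (hz : 0 ≤ z) (ht : 0 ≤ t) (hr : 0 ≤ r)
    (c : Fin m → ℝ) (J : List (Fin m)) (hu : 0 ≤ u + a + b) :
    hiddenEval (J.map (scanLayer r c) ++ [bumpLayer r]) (hiddenState z t u a b) =
      hiddenState z t
        (1 - r⁻¹ * (u + a + b + (J.map fun j ↦ (|z j - c j| - r)⁺).sum))⁺ 0 0 := by
  induction J generalizing u a b with
  | nil =>
    rw [List.map_nil, List.nil_append, hiddenEval_cons, posPart_bumpLayer hz ht]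
    simp [hiddenEval]
  | cons j J ih =>
    rw [List.map_cons, List.cons_append, hiddenEval_cons, posPart_scanLayer hz ht hu, ih,
      List.map_cons, List.sum_cons, ← posPart_sub_add_posPart_sub hr]
    · simp only [add_assoc]
    · positivity

/-- The layers that replace `t` by its maximum with `y * cubeBump r c z`. -/
def bumpBlock (r : ℝ) (c : Fin m → ℝ) (y : ℝ) :
    List ((Fin m ⊕ Fin 4 → ℝ) →ᵃ[ℝ] (Fin m ⊕ Fin 4 → ℝ)) :=
  ((List.finRange m).map (scanLayer r c) ++ [bumpLayer r]) ++ [compareLayer y, accumulateLayer]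

lemma length_bumpBlock (r : ℝ) (c : Fin m → ℝ) (y : ℝ) : (bumpBlock r c y).length = m + 3 := by
  simp [bumpBlock]

lemma hiddenEval_bumpBlock (hz : 0 ≤ z) (ht : 0 ≤ t) (hr : 0 ≤ r) (c : Fin m → ℝ) (y : ℝ) :
    hiddenEval (bumpBlock r c y) (hiddenState z t 0 0 0) =
      hiddenState z (max t (y * cubeBump r c z)) 0 0 0 := by
  have max_eq : t + (y * cubeBump r c z - t)⁺ = max t (y * cubeBump r c z) := by
    rw [posPart_def, ← max_add_add_left, add_sub_cancel, add_zero, max_comm]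
  have h_bump : hiddenEval ((List.finRange m).map (scanLayer r c) ++ [bumpLayer r])
      (hiddenState z t 0 0 0) = hiddenState z t (cubeBump r c z) 0 0 := by
    rw [hiddenEval_map_scanLayer_append_bumpLayer hz ht hr c _ (by simp), cubeBump,
      Fin.sum_univ_def]
    simp
  rw [bumpBlock, hiddenEval_append, h_bump, hiddenEval_cons, posPart_compareLayer hz ht,
    hiddenEval_cons, posPart_accumulateLayer hz (by positivity), max_eq]
  rfl

lemma hiddenEval_flatMap_bumpBlock {ι : Type*} (hz : 0 ≤ z) (ht : 0 ≤ t) (hr : 0 ≤ r)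
    (c : ι → Fin m → ℝ) (y : ι → ℝ) (I : List ι) :
    hiddenEval (I.flatMap fun i ↦ bumpBlock r (c i) (y i)) (hiddenState z t 0 0 0) =
      hiddenState z (I.foldl (fun t i ↦ max t (y i * cubeBump r (c i) z)) t) 0 0 0 := by
  induction I generalizing t with
  | nil => rfl
  | cons i I ih =>
    rw [List.flatMap_cons, hiddenEval_append, hiddenEval_bumpBlock hz ht hr,
      ih (le_max_of_le_left ht), List.foldl_cons]

end Layers

section Memorization

variable {ι : Type*} {d m : ℕ} {ρ : ℝ}

lemma foldl_max_eq {α : Type*} [LinearOrder α] {f : ι → α} {t M : α} {I : List ι} (ht : t ≤ M)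
    (hf : ∀ i ∈ I, f i ≤ M) (hM : t = M ∨ ∃ i ∈ I, f i = M) :
    I.foldl (fun t i ↦ max t (f i)) t = M := by
  induction I generalizing t with
  | nil => simpa using hM
  | cons i I ih =>
    refine ih (max_le ht (hf i List.mem_cons_self)) (fun j hj ↦ hf j (List.mem_cons_of_mem i hj)) ?_
    rcases hM with rfl | ⟨j, hj, rfl⟩
    · exact .inl (max_eq_left (hf i List.mem_cons_self))
    · rcases List.mem_cons.1 hj with rfl | hj
      · exact .inl (max_eq_right ht)
      · exact .inr ⟨j, hj, rfl⟩

lemma foldl_max_mul_cubeBump_eq {c : ι → Fin m → ℝ} {y : ι → ℝ} {z : Fin m → ℝ} (hρ : 0 < ρ)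
    (hy : 0 ≤ y) (hc : ∀ i j, y i ≠ y j → 3 * ρ ≤ ‖c i - c j‖) {i : ι} (hz : ‖z - c i‖ ≤ ρ)
    {I : List ι} (hi : i ∈ I) :
    I.foldl (fun t j ↦ max t (y j * cubeBump ρ (c j) z)) 0 = y i := by
  refine foldl_max_eq (hy i) (fun j _ ↦ ?_) (.inr ⟨i, hi, by rw [cubeBump_eq_one hz, mul_one]⟩)
  rcases eq_or_ne (y i) (y j) with hij | hij
  · rw [hij]
    exact mul_le_of_le_one_right (hy j) (cubeBump_le_one hρ.le)
  · have h_far : 2 * ρ ≤ ‖z - c j‖ := by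
      have := norm_sub_le_norm_sub_add_norm_sub (c i) z (c j)
      rw [norm_sub_rev (c i) z] at this
      linarith [hc i j hij]
    rw [cubeBump_eq_zero hρ h_far, mul_zero]
    exact hy i

lemma exists_mlp_eval_eq_foldl_max (hρ : 0 ≤ ρ) (P : (Fin d → ℝ) →ᵃ[ℝ] (Fin m → ℝ))
    (c : ι → Fin m → ℝ) (y : ι → ℝ) (I : List ι) :
    ∃ net : MLP d 1, net.width = m + 4 ∧ net.depth = I.length * (m + 3) + 2 ∧
      ∀ x, 0 ≤ P x →
        net.eval x 0 = I.foldl (fun t i ↦ max t (y i * cubeBump ρ (c i) (P x))) 0 := by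
  let input : (Fin d → ℝ) →ᵃ[ℝ] (Fin m ⊕ Fin 4 → ℝ) :=
    .pi (Sum.elim (fun j ↦ (AffineMap.proj j).comp P) 0)
  obtain ⟨net, h_width, h_depth, h_eval⟩ := exists_mlp_width_eq_card input
    (I.flatMap fun i ↦ bumpBlock ρ (c i) (y i)) (neuron (.inr 0))
  refine ⟨net, by simpa using h_width, by simpa [length_bumpBlock] using h_depth, fun x hx ↦ ?_⟩
  have h_input : (input x)⁺ = hiddenState (P x) 0 0 0 0 := by
    ext l
    rcases l with j | i
    · exact posPart_of_nonneg (hx j)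
    · fin_cases i <;> exact posPart_zero
  rw [h_eval, h_input, hiddenEval_flatMap_bumpBlock hx le_rfl hρ]
  rfl

lemma exists_mlp_eval_eq_of_separated_centers [Fintype ι] (hρ : 0 < ρ)
    (P : (Fin d → ℝ) →ᵃ[ℝ] (Fin m → ℝ)) (c : ι → Fin m → ℝ) {y : ι → ℝ} (hy : 0 ≤ y)
    (hc : ∀ i j, y i ≠ y j → 3 * ρ ≤ ‖c i - c j‖) :
    ∃ net : MLP d 1, net.width = m + 4 ∧ net.depth = Fintype.card ι * (m + 3) + 2 ∧
      ∀ i x, ‖P x - c i‖ ≤ ρ → net.eval x 0 = y i := by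
  -- Translating the features into the positive orthant lets ReLU transmit them unchanged.
  let v : Fin m → ℝ := fun _ ↦ ρ + ∑ i, ‖c i‖
  have nonneg_of_near {i : ι} {x} (hx : ‖P x - c i‖ ≤ ρ) : 0 ≤ P x + v := fun j ↦ by
    have h_feature : -(ρ + ‖c i‖) ≤ P x j := by
      have h_norm : ‖P x‖ ≤ ρ + ‖c i‖ := by linarith [norm_sub_norm_le (P x) (c i)]
      exact neg_le_of_abs_le ((norm_le_pi_norm (P x) j).trans h_norm)
    have h_sum : ‖c i‖ ≤ ∑ i, ‖c i‖ :=
      Finset.single_le_sum (fun i _ ↦ norm_nonneg (c i)) (Finset.mem_univ i)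
    change 0 ≤ P x j + (ρ + ∑ i, ‖c i‖)
    linarith
  obtain ⟨net, h_width, h_depth, h_eval⟩ := exists_mlp_eval_eq_foldl_max hρ.le
    (P + .const ℝ _ v) (fun i ↦ c i + v) y Finset.univ.toList
  refine ⟨net, h_width, by simpa using h_depth, fun i x hx ↦ ?_⟩
  rw [h_eval x (nonneg_of_near hx)]
  simp only [AffineMap.coe_add, Pi.add_apply, AffineMap.const_apply, cubeBump_add_right]
  exact foldl_max_mul_cubeBump_eq hρ hy hc hx (Finset.mem_toList.2 (Finset.mem_univ i))

end Memorization

/-! ### Robust memorization -/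

section Radius

variable {N d k : ℕ} {p : ℝ≥0∞}

lemma sqrt_mul_cplus_mul_rpow (hd : 0 < d) (p : ℝ≥0∞) :
    √d * cplus p d * (d : ℝ) ^ (-(1 : ℝ) / 2 + min (rinv p - 1 / 2) 0) = 1 := by
  have hd' : (0 : ℝ) < d := by exact_mod_cast hd
  have exponents_cancel :
      (1 : ℝ) / 2 + max (1 / 2 - rinv p) 0 + (-(1 : ℝ) / 2 + min (rinv p - 1 / 2) 0) = 0 := by
    rw [← neg_sub (rinv p), ← neg_zero, max_neg_neg]
    ring_nf
  rw [Real.sqrt_eq_rpow, cplus, ← Real.rpow_add hd', ← Real.rpow_add hd', exponents_cancel,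
    Real.rpow_zero]

lemma cube_radius_div_le (hd : 0 < d) {σ δ R : ℝ}
    (hσδ : σ / δ ≤ 1 / 8 * (d : ℝ) ^ (-(1 : ℝ) / 2 + min (rinv p - 1 / 2) 0) * R) :
    3 * (2 * √d * (cplus p d * σ)) / δ ≤ 3 / 4 * R := by
  have hcplus : 0 ≤ cplus p d := Real.rpow_nonneg (Nat.cast_nonneg d) _
  calc 3 * (2 * √d * (cplus p d * σ)) / δ = 6 * (√d * cplus p d) * (σ / δ) := by ring
    _ ≤ 6 * (√d * cplus p d) *
        (1 / 8 * (d : ℝ) ^ (-(1 : ℝ) / 2 + min (rinv p - 1 / 2) 0) * R) := by gcongr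
    _ = 3 / 4 * (√d * cplus p d * (d : ℝ) ^ (-(1 : ℝ) / 2 + min (rinv p - 1 / 2) 0)) * R := by
      ring
    _ = 3 / 4 * R := by rw [sqrt_mul_cplus_mul_rpow hd, mul_one]

lemma radius_bound_le (hN : 0 < N) (hk : 7 ≤ k) (e : ℝ) :
    1 / (8 * √(Real.exp 1)) * (d : ℝ) ^ e * (N : ℝ) ^ (-(2 : ℝ) / ((k : ℝ) - 6)) ≤
      1 / 8 * (d : ℝ) ^ e * (N : ℝ) ^ (-(2 : ℝ) / ((k : ℝ) - 4)) := by
  have hk' : (7 : ℝ) ≤ k := by exact_mod_cast hk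
  have h_const : 1 / (8 * √(Real.exp 1)) ≤ 1 / 8 :=
    one_div_le_one_div_of_le (by norm_num)
      (le_mul_of_one_le_right (by norm_num) (Real.one_le_sqrt.2 (Real.one_le_exp zero_le_one)))
  have h_exponent : -(2 : ℝ) / (k - 6) ≤ -2 / (k - 4) := by
    rw [neg_div, neg_div, neg_le_neg_iff]
    exact div_le_div_of_nonneg_left (by norm_num) (by linarith) (by linarith)
  gcongr
  exact_mod_cast hN

lemma depth_bound_le (hN : 2 ≤ N) (hk : 2 ≤ k) :
    ((N * (k - 1) + 2 : ℕ) : ℝ) ≤ N * k * Real.logb 2 k := by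
  have h_depth : N * (k - 1) + 2 ≤ N * k := by
    rw [Nat.mul_sub_one]
    have : N ≤ N * k := Nat.le_mul_of_pos_right N (by omega)
    omega
  have h_log : 1 ≤ Real.logb 2 k := by
    rw [Real.le_logb_iff_rpow_le one_lt_two (by positivity), Real.rpow_one]
    exact_mod_cast hk
  calc ((N * (k - 1) + 2 : ℕ) : ℝ) ≤ N * k := by exact_mod_cast h_depth
    _ ≤ N * k * Real.logb 2 k := le_mul_of_one_le_right (by positivity) h_log

end Radius

lemma exists_linearMap_separating_of_lpNorm {N d m : ℕ} (hN : 0 < N) (hd : 0 < d) (hm : m ≠ 0)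
    {δ s : ℝ} (hδ : 0 < δ) (hs : 0 ≤ s) (X : Fin N → Fin d → ℝ) {β : Type*} (Y : Fin N → β)
    (hX : ∀ i j, Y i ≠ Y j → δ ≤ lpNorm 2 (X i - X j))
    (hsδ : s / δ ≤ 3 / 4 * (N : ℝ) ^ (-(2 : ℝ) / m)) :
    ∃ T : (Fin d → ℝ) →ₗ[ℝ] (Fin m → ℝ), (∀ x, ‖T x‖ ≤ 2 * √d * lpNorm 2 x) ∧
      ∀ i j, Y i ≠ Y j → s ≤ ‖T (X i) - T (X j)‖ := by
  have : Nonempty (Fin N) := ⟨⟨0, hN⟩⟩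
  have : Nonempty (Fin d) := ⟨⟨0, hd⟩⟩
  obtain ⟨T, hT_le, hT_sep⟩ := exists_linearMap_separating_labels hm hδ hs
    (fun i ↦ WithLp.toLp 2 (X i)) Y (fun i j hij ↦ by
      simpa [lpNorm_two_eq_norm_toLp] using hX i j hij) (by simpa using hsδ)
  refine ⟨T ∘ₗ (WithLp.linearEquiv 2 ℝ (Fin d → ℝ)).symm.toLinearMap, fun x ↦ ?_, hT_sep⟩
  simpa [lpNorm_two_eq_norm_toLp] using hT_le (WithLp.toLp 2 x)

theorem robust_memorization_small_width_general {N d k : ℕ} {p : ℝ≥0∞} {σ δ : ℝ} (hN : 0 < N)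
    (hd : 0 < d) (hk : 5 ≤ k) (hp : 0 < p) (hσ : 0 < σ) (hδ : 0 < δ)
    (hσδ : σ / δ ≤ 1 / 8 * (d : ℝ) ^ (-(1 : ℝ) / 2 + min (rinv p - 1 / 2) 0) *
      (N : ℝ) ^ (-(2 : ℝ) / ((k : ℝ) - 4)))
    (X : Fin N → Fin d → ℝ) (Y : Fin N → ℕ)
    (hX : ∀ i j, Y i ≠ Y j → δ ≤ lpNorm 2 (X i - X j)) :
    ∃ net : MLP d 1, net.width = k ∧ net.depth = N * (k - 1) + 2 ∧
      RobustMem p σ X Y (fun x ↦ net.eval x 0) := by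
  obtain ⟨m, rfl⟩ := Nat.exists_eq_add_of_le' (show 4 ≤ k by omega)
  rw [Nat.cast_add, Nat.cast_ofNat, add_sub_cancel_right] at hσδ
  have hcplus : 0 < cplus p d := Real.rpow_pos_of_pos (by exact_mod_cast hd) _
  -- `T` maps the `l_p` ball of radius `σ` into a cube of radius `ρ`, and separates labels by `3ρ`.
  set ρ := 2 * √d * (cplus p d * σ) with hρ_def
  have hρ : 0 < ρ := by positivity
  obtain ⟨T, hT_le, hT_sep⟩ :=
    exists_linearMap_separating_of_lpNorm hN hd (by omega) hδ (by positivity) X Y hX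
      (cube_radius_div_le hd hσδ)
  obtain ⟨net, h_width, h_depth, h_eval⟩ := exists_mlp_eval_eq_of_separated_centers hρ
    T.toAffineMap (fun i ↦ T (X i)) (y := fun i ↦ (Y i : ℝ)) (fun i ↦ Nat.cast_nonneg _)
    fun i j hij ↦ hT_sep i j (by exact_mod_cast hij)
  refine ⟨net, h_width, by simpa using h_depth, fun i x hx ↦ h_eval i x ?_⟩
  calc ‖T x - T (X i)‖ = ‖T (x - X i)‖ := by rw [map_sub]
    _ ≤ 2 * √d * lpNorm 2 (x - X i) := hT_le _
    _ ≤ 2 * √d * (cplus p d * lpNorm p (x - X i)) := by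
      gcongr
      exact lpNorm_two_le_cplus_mul_lpNorm _ hp.ne'
    _ ≤ ρ := by rw [hρ_def]; gcongr

/-- **Robust memorization with small width** (upper bound, `7 ≤ k ≤ d + 5`). -/
theorem robust_memorization_small_width :
    ∃ C₀ : ℝ, 0 < C₀ ∧
      ∀ (N d C k : ℕ) (p : ℝ≥0∞) (σ δ : ℝ),
        2 ≤ N → 2 ≤ d → 2 ≤ C → 7 ≤ k → k ≤ d + 5 → 0 < p → 0 < σ → 0 < δ →
        σ / δ ≤ (1 / (8 * Real.sqrt (Real.exp 1))) *
            (d : ℝ) ^ (-(1 : ℝ) / 2 + min (rinv p - 1 / 2) 0) *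
            (N : ℝ) ^ (-(2 : ℝ) / ((k : ℝ) - 6)) →
        ∀ (X : Fin N → Fin d → ℝ) (Y : Fin N → ℕ),
          (∀ i, 1 ≤ Y i ∧ Y i ≤ C) → Separated 2 δ X Y →
          ∃ net : MLP d 1, net.width = k ∧
            (net.depth : ℝ) ≤ C₀ * N * k * Real.logb 2 k ∧
            RobustMem p σ X Y (fun x => net.eval x 0) := by
  refine ⟨1, one_pos, fun N d C k p σ δ hN hd _ hk _ hp hσ hδ hσδ X Y _ hsep ↦ ?_⟩
  obtain ⟨net, h_width, h_depth, h_mem⟩ := robust_memorization_small_width_general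
    (by omega) (by omega) (by omega) hp hσ hδ (hσδ.trans (radius_bound_le (by omega) hk _))
    X Y hsep.1
  exact ⟨net, h_width, by simpa only [h_depth, one_mul] using depth_bound_le hN (by omega), h_mem⟩

end
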